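/- Fix 0 < α ≤ 2, T > 0, and an integer j ≥ 0. Let g : (0,T) → ℂ be measurable with ∫_0^T |g(τ)|² τ^α dτ < ∞, and for 0 < t < T set v(·,t) := L_t^α g (using the restriction of g to (0,t)). Then for every fixed ξ > 0, lim_{t→0⁺} t^α · |∂_ξ^j ( v(ξ,t) · ξ^{-(α-1)(α+2)/(2α)} · exp((α²/(4t)) ξ^{2/α}) )|² = 0, where ∂_ξ^j denotes the j-th derivative in ξ at fixed t. -/

import Mathlib

open MeasureTheory Filter Set

/-- The kernel `K_α(x,s) = (α^α/(2^α Γ(α/2))) x s^{-(α/2+1)} exp(-α² x^{2/α}/(4s))`. -/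
noncomputable def Kker (α x s : ℝ) : ℝ :=
  (α ^ α / (2 ^ α * Real.Gamma (α / 2))) * x * s ^ (-(α / 2 + 1)) *
    Real.exp (-(α ^ 2) * x ^ (2 / α) / (4 * s))

/-- The transform `(L_t^α g)(x) = t^{-α} ∫_0^t K_α(x,t-τ) g(τ) τ^α dτ`. -/
noncomputable def Lt (α t : ℝ) (g : ℝ → ℂ) (x : ℝ) : ℂ :=
  ((t ^ (-α) : ℝ) : ℂ) *
    ∫ τ in Set.Ioo (0 : ℝ) t, (Kker α x (t - τ) : ℂ) * g τ * ((τ ^ α : ℝ) : ℂ)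

/-!
Multiplication by `exp((α²/(4t)) x^{2/α})` turns the integral in `L_t^α g` into a Laplace transform
in the variable `w = 1/(t-τ) - 1/t > 0`, evaluated at `y = (α²/4) x^{2/α}`, hence holomorphic for
`Re y > 0`. By Cauchy–Schwarz and the substitution `τ ↦ w`, its square is at most
`t^α Γ(α+1) (2s)^{-(α+1)} ∫_0^t |g|² τ^α` uniformly on `Re y ≥ s`. Cauchy's estimate on a complex
neighbourhood of `ξ`, independent of `t`, carries this bound over to every derivative, and the
integral over `(0,t)` tends to `0`.
-/

open scoped Topology

section CauchySchwarz

variable {Ω E F : Type*} [MeasurableSpace Ω] [NormedAddCommGroup E] [NormedAddCommGroup F]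
  {μ : Measure Ω}

theorem sq_integral_norm_mul_norm_le {f : Ω → E} {g : Ω → F} (hf : MemLp f 2 μ)
    (hg : MemLp g 2 μ) :
    (∫ ω, ‖f ω‖ * ‖g ω‖ ∂μ) ^ 2 ≤ (∫ ω, ‖f ω‖ ^ 2 ∂μ) * ∫ ω, ‖g ω‖ ^ 2 ∂μ := by
  have holder : ∫ ω, ‖f ω‖ * ‖g ω‖ ∂μ ≤ √(∫ ω, ‖f ω‖ ^ 2 ∂μ) * √(∫ ω, ‖g ω‖ ^ 2 ∂μ) := by
    simpa [Real.sqrt_eq_rpow] using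
      integral_mul_norm_le_Lp_mul_Lq (μ := μ) (f := fun ω => ‖f ω‖) (g := fun ω => ‖g ω‖)
        Real.HolderConjugate.two_two (by simpa using hf.norm) (by simpa using hg.norm)
  calc (∫ ω, ‖f ω‖ * ‖g ω‖ ∂μ) ^ 2
      ≤ (√(∫ ω, ‖f ω‖ ^ 2 ∂μ) * √(∫ ω, ‖g ω‖ ^ 2 ∂μ)) ^ 2 := by gcongr
    _ = (∫ ω, ‖f ω‖ ^ 2 ∂μ) * ∫ ω, ‖g ω‖ ^ 2 ∂μ := by
        rw [mul_pow, Real.sq_sqrt (by positivity), Real.sq_sqrt (by positivity)]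

end CauchySchwarz

theorem tendsto_setIntegral_Ioo_nhdsGT {E : Type*} [NormedAddCommGroup E] [NormedSpace ℝ E]
    {f : ℝ → E} {a b : ℝ} (hab : a < b) (hf : IntegrableOn f (Ioo a b)) :
    Tendsto (fun t => ∫ τ in Ioo a t, f τ) (𝓝[>] a) (𝓝 0) := by
  have primitive_continuous := intervalIntegral.continuousOn_primitive
    (integrableOn_Icc_iff_integrableOn_Ioo (f := f) |>.2 hf)
  have at_left := (primitive_continuous a (left_mem_Icc.2 hab.le)).mono Ioo_subset_Icc_self
  simpa [ContinuousWithinAt, integral_Ioc_eq_integral_Ioo, nhdsWithin_Ioo_eq_nhdsGT hab]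
    using at_left

section CauchyEstimate

variable {E : Type*} [NormedAddCommGroup E] [NormedSpace ℂ E] [CompleteSpace E]

theorem iteratedDeriv_comp_ofReal {f : ℂ → E} {U : Set ℂ} (hU : IsOpen U)
    (hf : DifferentiableOn ℂ f U) (n : ℕ) {x : ℝ} (hx : (x : ℂ) ∈ U) :
    iteratedDeriv n (fun s : ℝ => f s) x = iteratedDeriv n f x := by
  induction n generalizing x with
  | zero => simp only [iteratedDeriv_zero]
  | succ n ih =>
    have eq_near : iteratedDeriv n (fun s : ℝ => f s) =ᶠ[𝓝 x]
        fun s : ℝ => iteratedDeriv n f (s : ℂ) := by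
      filter_upwards [(hU.preimage Complex.continuous_ofReal).mem_nhds hx] with s hs using ih hs
    have differentiable : DifferentiableAt ℂ (iteratedDeriv n f) x := by
      rw [iteratedDeriv_eq_iterate]
      exact ((hf.analyticAt (hU.mem_nhds hx)).iterated_deriv n).differentiableAt
    rw [iteratedDeriv_succ, iteratedDeriv_succ, eq_near.deriv_eq]
    simpa [Function.comp_def] using
      (differentiable.hasDerivAt.scomp x Complex.ofRealCLM.hasDerivAt).deriv

theorem exists_norm_iteratedDeriv_comp_ofReal_le {U : Set ℂ} {x : ℝ} (hU : U ∈ 𝓝 (x : ℂ))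
    (n : ℕ) : ∃ C : ℝ, ∀ (f : ℂ → E) (M : ℝ), DifferentiableOn ℂ f U → (∀ z ∈ U, ‖f z‖ ≤ M) →
      ‖iteratedDeriv n (fun s : ℝ => f s) x‖ ≤ C * M := by
  obtain ⟨r, hr, hrU⟩ := Metric.nhds_basis_closedBall.mem_iff.1 hU
  refine ⟨n.factorial / r ^ n, fun f M hf hM => ?_⟩
  rw [iteratedDeriv_comp_ofReal Metric.isOpen_ball
    (hf.mono (Metric.ball_subset_closedBall.trans hrU)) n (Metric.mem_ball_self hr)]
  calc ‖iteratedDeriv n f x‖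
      ≤ n.factorial * M / r ^ n :=
        Complex.norm_iteratedDeriv_le_of_forall_mem_sphere_norm_le n hr
          (hf.diffContOnCl_ball hrU) fun z hz => hM z (hrU (Metric.sphere_subset_closedBall hz))
    _ = n.factorial / r ^ n * M := by ring

end CauchyEstimate

section LaplaceIntegral

variable {Ω E : Type*} [MeasurableSpace Ω] [NormedAddCommGroup E] [NormedSpace ℂ E]
  {μ : Measure Ω} {w : Ω → ℝ}

/-- The Laplace transform `y ↦ ∫ e^{-y w} φ dμ` of the density `φ` with respect to the real
observable `w`. -/
noncomputable def laplaceIntegral (μ : Measure Ω) (w : Ω → ℝ) (φ : Ω → E) (y : ℂ) : E :=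
  ∫ ω, Complex.exp (-(y * w ω)) • φ ω ∂μ

theorem norm_cexp_neg_mul_ofReal_smul (y : ℂ) (r : ℝ) (v : E) :
    ‖Complex.exp (-(y * r)) • v‖ = Real.exp (-(y.re * r)) * ‖v‖ := by
  rw [norm_smul, Complex.norm_exp, Complex.neg_re, Complex.re_mul_ofReal]

theorem mul_exp_neg_mul_le_inv {ε : ℝ} (hε : 0 < ε) (x : ℝ) :
    x * Real.exp (-(ε * x)) ≤ ε⁻¹ := by
  rw [← one_div, le_div_iff₀' hε, ← mul_assoc]
  exact (Real.mul_exp_neg_le_exp_neg_one _).trans (Real.exp_le_one_iff.2 (by norm_num))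

theorem laplaceIntegral_shift (φ : Ω → E) (s y : ℂ) :
    laplaceIntegral μ w φ y =
      laplaceIntegral μ w (fun ω => Complex.exp (-(s * w ω)) • φ ω) (y - s) := by
  unfold laplaceIntegral
  congr 1 with ω
  rw [smul_smul, ← Complex.exp_add]
  ring_nf

theorem hasDerivAt_laplaceIntegral {φ : Ω → E} (hw : AEMeasurable w μ)
    (hw₀ : ∀ᵐ ω ∂μ, 0 ≤ w ω) (hφ : Integrable φ μ) {y : ℂ} (hy : 0 < y.re) :
    HasDerivAt (laplaceIntegral μ w φ)
      (laplaceIntegral μ w (fun ω => (-(w ω) : ℂ) • φ ω) y) y := by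
  set ε := y.re / 2
  have hε : 0 < ε := half_pos hy
  have half_plane_mem : {z : ℂ | ε < z.re} ∈ 𝓝 y :=
    (isOpen_lt continuous_const Complex.continuous_re).mem_nhds (half_lt_self hy)
  have measurable (z : ℂ) : AEStronglyMeasurable (fun ω => Complex.exp (-(z * w ω)) • φ ω) μ :=
    AEStronglyMeasurable.smul (by fun_prop) hφ.1
  refine (hasDerivAt_integral_of_dominated_loc_of_deriv_le (bound := fun ω => ε⁻¹ * ‖φ ω‖)
    (F' := fun z ω => Complex.exp (-(z * w ω)) • (-(w ω) : ℂ) • φ ω)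
    half_plane_mem (.of_forall measurable) ?_ ?_ ?_ (hφ.norm.const_mul _) ?_).2
  · refine hφ.mono (measurable y) ?_
    filter_upwards [hw₀] with ω hω
    rw [norm_cexp_neg_mul_ofReal_smul]
    exact mul_le_of_le_one_left (norm_nonneg _) (Real.exp_le_one_iff.2 (by nlinarith))
  · exact AEStronglyMeasurable.smul (by fun_prop)
      (AEStronglyMeasurable.smul (by fun_prop) hφ.1)
  · filter_upwards [hw₀] with ω hω z hz
    calc ‖Complex.exp (-(z * w ω)) • (-(w ω) : ℂ) • φ ω‖
        = w ω * Real.exp (-(z.re * w ω)) * ‖φ ω‖ := by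
          rw [norm_cexp_neg_mul_ofReal_smul, norm_smul, norm_neg, Complex.norm_of_nonneg hω]
          ring
      _ ≤ w ω * Real.exp (-(ε * w ω)) * ‖φ ω‖ := by
          gcongr
      _ ≤ ε⁻¹ * ‖φ ω‖ := by
          gcongr
          exact mul_exp_neg_mul_le_inv hε _
  · refine .of_forall fun ω z _ => ?_
    have exponent : HasDerivAt (fun z : ℂ => -(z * w ω)) (-(w ω)) z :=
      (hasDerivAt_mul_const _).fun_neg
    simpa only [smul_smul] using exponent.cexp.smul_const (φ ω)

theorem differentiableAt_laplaceIntegral {φ : Ω → E} {s : ℝ} {y : ℂ} (hw : AEMeasurable w μ)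
    (hw₀ : ∀ᵐ ω ∂μ, 0 ≤ w ω)
    (hφ : Integrable (fun ω => Complex.exp (-(s * w ω)) • φ ω) μ) (hy : s < y.re) :
    DifferentiableAt ℂ (laplaceIntegral μ w φ) y := by
  have shifted := (hasDerivAt_laplaceIntegral (y := y - s) hw hw₀ hφ
    (by simpa using hy)).differentiableAt
  rw [funext (laplaceIntegral_shift φ s)]
  exact shifted.comp (f := fun z : ℂ => z - s) y (differentiableAt_id.sub_const _)

theorem norm_laplaceIntegral_smul_sq_le {a : Ω → ℝ} {h : Ω → E} {s : ℝ} {y : ℂ}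
    (hw₀ : ∀ᵐ ω ∂μ, 0 ≤ w ω) (ha : MemLp (fun ω => Real.exp (-(s * w ω)) * a ω) 2 μ)
    (hh : MemLp h 2 μ) (hy : s ≤ y.re) :
    ‖laplaceIntegral μ w (fun ω => (a ω : ℂ) • h ω) y‖ ^ 2 ≤
      (∫ ω, (Real.exp (-(s * w ω)) * a ω) ^ 2 ∂μ) * ∫ ω, ‖h ω‖ ^ 2 ∂μ := by
  have norm_le : ‖laplaceIntegral μ w (fun ω => (a ω : ℂ) • h ω) y‖ ≤
      ∫ ω, ‖Real.exp (-(s * w ω)) * a ω‖ * ‖h ω‖ ∂μ := by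
    refine norm_integral_le_of_norm_le (ha.norm.integrable_mul hh.norm) ?_
    filter_upwards [hw₀] with ω hω
    rw [norm_cexp_neg_mul_ofReal_smul, norm_smul, Complex.norm_real, norm_mul,
      Real.norm_of_nonneg (Real.exp_nonneg _), mul_assoc]
    gcongr
  calc ‖laplaceIntegral μ w (fun ω => (a ω : ℂ) • h ω) y‖ ^ 2
      ≤ (∫ ω, ‖Real.exp (-(s * w ω)) * a ω‖ * ‖h ω‖ ∂μ) ^ 2 := by gcongr
    _ ≤ _ := sq_integral_norm_mul_norm_le ha hh
    _ = _ := by simp only [Real.norm_eq_abs, sq_abs]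

end LaplaceIntegral

section InverseLag

/-- The time substitution `w = 1/(t-τ) - 1/t`, an increasing bijection from `(0,t)` onto `(0,∞)`.
It is what remains in the exponent of `K_α(x,t-τ)` after multiplication by
`exp((α²/(4t)) x^{2/α})`. -/
noncomputable def inverseLag (t τ : ℝ) : ℝ := (t - τ)⁻¹ - t⁻¹

@[fun_prop]
theorem measurable_inverseLag (t : ℝ) : Measurable (inverseLag t) := by
  unfold inverseLag
  fun_prop

theorem strictMonoOn_inverseLag (t : ℝ) : StrictMonoOn (inverseLag t) (Iio t) :=
  fun _ _ _ hτ hlt =>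
    sub_lt_sub_right (inv_strictAnti₀ (sub_pos.2 hτ) (sub_lt_sub_left hlt t)) _

theorem inverseLag_zero (t : ℝ) : inverseLag t 0 = 0 := by
  simp only [inverseLag, sub_zero, sub_self]

theorem inverseLag_pos {t τ : ℝ} (hτ : τ ∈ Ioo 0 t) : 0 < inverseLag t τ :=
  inverseLag_zero t ▸ strictMonoOn_inverseLag t (hτ.1.trans hτ.2) hτ.2 hτ.1

theorem ae_inverseLag_nonneg (t : ℝ) :
    ∀ᵐ τ ∂volume.restrict (Ioo 0 t), 0 ≤ inverseLag t τ := by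
  filter_upwards [ae_restrict_mem measurableSet_Ioo] with τ hτ using (inverseLag_pos hτ).le

theorem mul_inverseLag {t τ : ℝ} (hτ : τ ∈ Ioo 0 t) :
    t * inverseLag t τ = τ / (t - τ) := by
  have ht : t ≠ 0 := (hτ.1.trans hτ.2).ne'
  have hlag : t - τ ≠ 0 := (sub_pos.2 hτ.2).ne'
  unfold inverseLag
  field_simp
  ring

theorem image_inverseLag_Ioo {t : ℝ} (ht : 0 < t) : inverseLag t '' Ioo 0 t = Ioi 0 := by
  refine Subset.antisymm (image_subset_iff.2 fun τ hτ => inverseLag_pos hτ) fun w hw => ?_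
  have hw' : t⁻¹ < w + t⁻¹ := lt_add_of_pos_left _ hw
  refine ⟨t - (w + t⁻¹)⁻¹, ⟨sub_pos.2 ?_, sub_lt_self t ?_⟩, ?_⟩
  · exact inv_lt_of_inv_lt₀ ht hw'
  · exact inv_pos.2 ((inv_pos.2 ht).trans hw')
  · simp only [inverseLag, sub_sub_cancel, inv_inv, add_sub_cancel_right]

theorem hasDerivAt_inverseLag {t τ : ℝ} (hτ : τ ≠ t) :
    HasDerivAt (inverseLag t) (((t - τ) ^ 2)⁻¹) τ := by
  have inv_derivative :=
    (((hasDerivAt_id τ).const_sub t).inv (sub_ne_zero.2 hτ.symm)).sub_const t⁻¹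
  exact inv_derivative.congr_deriv (by simp only [neg_neg, id, one_div])

variable {E : Type*} [NormedAddCommGroup E] [NormedSpace ℝ E] {t : ℝ}

theorem integrableOn_comp_inverseLag_iff (ht : 0 < t) (f : ℝ → E) :
    IntegrableOn (fun τ => ((t - τ) ^ 2)⁻¹ • f (inverseLag t τ)) (Ioo 0 t) ↔
      IntegrableOn f (Ioi 0) := by
  rw [← image_inverseLag_Ioo ht, integrableOn_image_iff_integrableOn_deriv_smul_of_monotoneOn
    measurableSet_Ioo (fun τ hτ => (hasDerivAt_inverseLag hτ.2.ne).hasDerivWithinAt)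
    ((strictMonoOn_inverseLag t).monotoneOn.mono Ioo_subset_Iio_self)]

theorem integral_comp_inverseLag (ht : 0 < t) (f : ℝ → E) :
    ∫ τ in Ioo 0 t, ((t - τ) ^ 2)⁻¹ • f (inverseLag t τ) = ∫ w in Ioi 0, f w := by
  rw [← image_inverseLag_Ioo ht, integral_image_eq_integral_deriv_smul_of_monotoneOn
    measurableSet_Ioo (fun τ hτ => (hasDerivAt_inverseLag hτ.2.ne).hasDerivWithinAt)
    ((strictMonoOn_inverseLag t).monotoneOn.mono Ioo_subset_Iio_self)]

end InverseLag

section LagWeight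

variable {α t s : ℝ}

/-- The part of the weight `(t-τ)^{-(α/2+1)} τ^α` of `L_t^α` left over when one factor `τ^{α/2}`
is given to `g`, so that `τ^{α/2} g` lies in the unweighted `L²`. -/
noncomputable def lagWeight (α t τ : ℝ) : ℝ := (t - τ) ^ (-(α / 2 + 1)) * τ ^ (α / 2)

@[fun_prop]
theorem measurable_lagWeight (α t : ℝ) : Measurable (lagWeight α t) := by
  unfold lagWeight
  fun_prop

theorem lagWeight_sq {τ : ℝ} (hτ : τ ∈ Ioo 0 t) :
    lagWeight α t τ ^ 2 = ((t - τ) ^ 2)⁻¹ * (t ^ α * inverseLag t τ ^ α) := by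
  have hlag : 0 < t - τ := sub_pos.2 hτ.2
  have lag_sq : ((t - τ) ^ (-(α / 2 + 1))) ^ 2 = ((t - τ) ^ 2)⁻¹ * ((t - τ) ^ α)⁻¹ := by
    rw [← Real.rpow_mul_natCast hlag.le, ← Real.rpow_natCast, ← Real.rpow_neg hlag.le,
      ← Real.rpow_neg hlag.le, ← Real.rpow_add hlag]
    congr 1
    push_cast
    ring
  have time_sq : (τ ^ (α / 2)) ^ 2 = τ ^ α := by
    rw [← Real.rpow_mul_natCast hτ.1.le]
    congr 1
    push_cast
    ring
  rw [← Real.mul_rpow (hτ.1.trans hτ.2).le (inverseLag_pos hτ).le, mul_inverseLag hτ,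
    Real.div_rpow hτ.1.le hlag.le, lagWeight, mul_pow, lag_sq, time_sq]
  ring

theorem sq_exp_mul_lagWeight {τ : ℝ} (hτ : τ ∈ Ioo 0 t) :
    (Real.exp (-(s * inverseLag t τ)) * lagWeight α t τ) ^ 2 =
      ((t - τ) ^ 2)⁻¹ •
        (t ^ α * (inverseLag t τ ^ α * Real.exp (-(2 * s * inverseLag t τ)))) := by
  have exp_sq : Real.exp (-(s * inverseLag t τ)) ^ 2 =
      Real.exp (-(2 * s * inverseLag t τ)) := by
    rw [← Real.exp_nat_mul]
    congr 1
    push_cast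
    ring
  rw [mul_pow, exp_sq, lagWeight_sq hτ, smul_eq_mul]
  ring

theorem memLp_exp_mul_lagWeight (hα : -1 < α) (ht : 0 < t) (hs : 0 < s) :
    MemLp (fun τ => Real.exp (-(s * inverseLag t τ)) * lagWeight α t τ) 2
      (volume.restrict (Ioo 0 t)) := by
  have gamma_integrable :
      IntegrableOn (fun w : ℝ => t ^ α * (w ^ α * Real.exp (-(2 * s * w)))) (Ioi 0) := by
    refine Integrable.const_mul ?_ _
    simpa [IntegrableOn] using
      integrableOn_rpow_mul_exp_neg_mul_rpow hα one_pos (mul_pos two_pos hs)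
  rw [memLp_two_iff_integrable_sq (Measurable.aestronglyMeasurable (by fun_prop))]
  exact (integrableOn_congr_fun (fun τ hτ => sq_exp_mul_lagWeight hτ) measurableSet_Ioo).2
    ((integrableOn_comp_inverseLag_iff ht _).2 gamma_integrable)

theorem integral_sq_exp_mul_lagWeight (hα : -1 < α) (ht : 0 < t) (hs : 0 < s) :
    ∫ τ in Ioo 0 t, (Real.exp (-(s * inverseLag t τ)) * lagWeight α t τ) ^ 2 =
      t ^ α * ((1 / (2 * s)) ^ (α + 1) * Real.Gamma (α + 1)) := by
  rw [setIntegral_congr_fun measurableSet_Ioo fun τ hτ => sq_exp_mul_lagWeight hτ,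
    integral_comp_inverseLag ht
      (fun w : ℝ => t ^ α * (w ^ α * Real.exp (-(2 * s * w)))), integral_const_mul]
  congr 1
  simpa using Real.integral_rpow_mul_exp_neg_mul_Ioi (a := α + 1) (by linarith)
    (mul_pos two_pos hs)

end LagWeight

section LagLaplace

variable {α t s : ℝ} {g : ℝ → ℂ}

/-- The integral in `L_t^α g` in Laplace form: up to an explicit factor,
`(L_t^α g)(x) exp((α²/(4t)) x^{2/α})` is its value at `y = (α²/4) x^{2/α}`. -/
noncomputable def lagLaplace (α t : ℝ) (g : ℝ → ℂ) : ℂ → ℂ :=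
  laplaceIntegral (volume.restrict (Ioo 0 t)) (inverseLag t)
    fun τ => (lagWeight α t τ : ℂ) • (((τ ^ (α / 2) : ℝ) : ℂ) * g τ)

theorem norm_rpow_half_mul_sq {τ : ℝ} (hτ : 0 ≤ τ) :
    ‖((τ ^ (α / 2) : ℝ) : ℂ) * g τ‖ ^ 2 = ‖g τ‖ ^ 2 * τ ^ α := by
  rw [norm_mul, Complex.norm_of_nonneg (Real.rpow_nonneg hτ _), mul_pow,
    ← Real.rpow_mul_natCast hτ, Nat.cast_two, div_mul_cancel₀ _ two_ne_zero, mul_comm]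

theorem memLp_rpow_half_mul (hg : AEStronglyMeasurable g (volume.restrict (Ioo 0 t)))
    (hint : IntegrableOn (fun τ => ‖g τ‖ ^ 2 * τ ^ α) (Ioo 0 t)) :
    MemLp (fun τ => ((τ ^ (α / 2) : ℝ) : ℂ) * g τ) 2 (volume.restrict (Ioo 0 t)) := by
  have weight_measurable : Measurable fun τ : ℝ => ((τ ^ (α / 2) : ℝ) : ℂ) := by fun_prop
  refine (memLp_two_iff_integrable_sq_norm (weight_measurable.aestronglyMeasurable.mul hg)).2 ?_
  exact (integrableOn_congr_fun (fun τ hτ => norm_rpow_half_mul_sq hτ.1.le)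
    measurableSet_Ioo).2 hint

theorem differentiableAt_lagLaplace (hα : -1 < α) (ht : 0 < t)
    (hg : AEStronglyMeasurable g (volume.restrict (Ioo 0 t)))
    (hint : IntegrableOn (fun τ => ‖g τ‖ ^ 2 * τ ^ α) (Ioo 0 t)) {y : ℂ} (hy : 0 < y.re) :
    DifferentiableAt ℂ (lagLaplace α t g) y := by
  refine differentiableAt_laplaceIntegral (s := y.re / 2) (by fun_prop)
    (ae_inverseLag_nonneg t) ?_ (half_lt_self hy)
  have product_integrable := (memLp_exp_mul_lagWeight hα ht (half_pos hy)).ofReal.integrable_mul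
    (memLp_rpow_half_mul hg hint) (𝕜 := ℂ)
  refine product_integrable.congr (.of_forall fun τ => ?_)
  simp [mul_assoc]

theorem norm_lagLaplace_sq_le (hα : -1 < α) (ht : 0 < t) (hs : 0 < s)
    (hg : AEStronglyMeasurable g (volume.restrict (Ioo 0 t)))
    (hint : IntegrableOn (fun τ => ‖g τ‖ ^ 2 * τ ^ α) (Ioo 0 t)) {y : ℂ} (hy : s ≤ y.re) :
    ‖lagLaplace α t g y‖ ^ 2 ≤ t ^ α * ((1 / (2 * s)) ^ (α + 1) * Real.Gamma (α + 1)) *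
      ∫ τ in Ioo 0 t, ‖g τ‖ ^ 2 * τ ^ α := by
  rw [← integral_sq_exp_mul_lagWeight hα ht hs,
    ← setIntegral_congr_fun measurableSet_Ioo fun τ hτ => norm_rpow_half_mul_sq hτ.1.le]
  exact norm_laplaceIntegral_smul_sq_le (ae_inverseLag_nonneg t)
    (memLp_exp_mul_lagWeight hα ht hs) (memLp_rpow_half_mul hg hint) hy

theorem Kker_sub_mul_exp (x : ℝ) {τ : ℝ} (hτ : τ ∈ Ioo 0 t) :
    Kker α x (t - τ) * Real.exp (α ^ 2 / (4 * t) * x ^ (2 / α)) =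
      α ^ α / (2 ^ α * Real.Gamma (α / 2)) * x * (t - τ) ^ (-(α / 2 + 1)) *
        Real.exp (-(α ^ 2 / 4 * x ^ (2 / α) * inverseLag t τ)) := by
  have ht : t ≠ 0 := (hτ.1.trans hτ.2).ne'
  have hlag : t - τ ≠ 0 := (sub_pos.2 hτ.2).ne'
  rw [Kker, mul_assoc _ (Real.exp _), ← Real.exp_add]
  congr 2
  unfold inverseLag
  field_simp
  ring

theorem Lt_mul_exp (x : ℝ) :
    Lt α t g x * ((Real.exp (α ^ 2 / (4 * t) * x ^ (2 / α)) : ℝ) : ℂ) =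
      ((t ^ (-α) * (α ^ α / (2 ^ α * Real.Gamma (α / 2))) * x : ℝ) : ℂ) *
        lagLaplace α t g ((α ^ 2 / 4 * x ^ (2 / α) : ℝ) : ℂ) := by
  set k := α ^ α / (2 ^ α * Real.Gamma (α / 2))
  have integral_eq : (∫ τ in Ioo 0 t, (Kker α x (t - τ) : ℂ) * g τ * ((τ ^ α : ℝ) : ℂ)) *
      ((Real.exp (α ^ 2 / (4 * t) * x ^ (2 / α)) : ℝ) : ℂ) =
        ((k * x : ℝ) : ℂ) * lagLaplace α t g ((α ^ 2 / 4 * x ^ (2 / α) : ℝ) : ℂ) := by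
    rw [lagLaplace, laplaceIntegral, ← integral_mul_const, ← integral_const_mul]
    refine setIntegral_congr_fun measurableSet_Ioo fun τ hτ => ?_
    have time_split : τ ^ α = τ ^ (α / 2) * τ ^ (α / 2) := by
      rw [← Real.rpow_add hτ.1, add_halves]
    have kernel := congrArg Complex.ofReal (Kker_sub_mul_exp (α := α) x hτ)
    simp only [Complex.ofReal_mul, Complex.ofReal_exp, Complex.ofReal_neg] at kernel
    simp only [lagWeight, time_split, smul_eq_mul, Complex.ofReal_mul, Complex.ofReal_exp]
    linear_combination (g τ * ((τ ^ (α / 2) : ℝ) : ℂ) * ((τ ^ (α / 2) : ℝ) : ℂ)) * kernel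
  rw [Lt, mul_assoc, integral_eq]
  push_cast
  ring

end LagLaplace

section GaugedExtension

variable {α p t s M : ℝ} {g : ℝ → ℂ} {z : ℂ}

/-- The extension of `x ↦ (L_t^α g)(x) x^p exp((α²/(4t)) x^{2/α})` off the positive half-line,
with principal powers; it is holomorphic wherever `Re z^{2/α} > 0` on the slit plane. -/
noncomputable def gaugedExtension (α p t : ℝ) (g : ℝ → ℂ) (z : ℂ) : ℂ :=
  ((t ^ (-α) * (α ^ α / (2 ^ α * Real.Gamma (α / 2))) : ℝ) : ℂ) * z ^ ((p + 1 : ℝ) : ℂ) *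
    lagLaplace α t g (((α ^ 2 / 4 : ℝ) : ℂ) * z ^ ((2 / α : ℝ) : ℂ))

theorem gaugedExtension_ofReal {x : ℝ} (hx : 0 < x) :
    gaugedExtension α p t g x = Lt α t g x * ((x ^ p : ℝ) : ℂ) *
      ((Real.exp (α ^ 2 / (4 * t) * x ^ (2 / α)) : ℝ) : ℂ) := by
  rw [mul_right_comm, Lt_mul_exp, gaugedExtension, ← Complex.ofReal_cpow hx.le,
    ← Complex.ofReal_cpow hx.le, Real.rpow_add_one hx.ne']
  push_cast
  ring

theorem differentiableAt_gaugedExtension (hα : -1 < α) (ht : 0 < t)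
    (hg : AEStronglyMeasurable g (volume.restrict (Ioo 0 t)))
    (hint : IntegrableOn (fun τ => ‖g τ‖ ^ 2 * τ ^ α) (Ioo 0 t)) (hz : z ∈ Complex.slitPlane)
    (hre : 0 < (((α ^ 2 / 4 : ℝ) : ℂ) * z ^ ((2 / α : ℝ) : ℂ)).re) :
    DifferentiableAt ℂ (gaugedExtension α p t g) z := by
  have power (q : ℂ) : DifferentiableAt ℂ (fun z : ℂ => z ^ q) z :=
    differentiableAt_id.cpow_const hz
  have laplace_comp := (differentiableAt_lagLaplace hα ht hg hint hre).comp z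
    ((power ((2 / α : ℝ) : ℂ)).const_mul ((α ^ 2 / 4 : ℝ) : ℂ))
  exact ((power _).const_mul _).mul laplace_comp

theorem rpow_mul_norm_gaugedExtension_sq_le (hα : -1 < α) (ht : 0 < t) (hs : 0 < s)
    (hg : AEStronglyMeasurable g (volume.restrict (Ioo 0 t)))
    (hint : IntegrableOn (fun τ => ‖g τ‖ ^ 2 * τ ^ α) (Ioo 0 t))
    (hM : ‖z ^ ((p + 1 : ℝ) : ℂ)‖ ≤ M)
    (hre : s ≤ (((α ^ 2 / 4 : ℝ) : ℂ) * z ^ ((2 / α : ℝ) : ℂ)).re) :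
    t ^ α * ‖gaugedExtension α p t g z‖ ^ 2 ≤
      (α ^ α / (2 ^ α * Real.Gamma (α / 2))) ^ 2 * M ^ 2 *
        ((1 / (2 * s)) ^ (α + 1) * Real.Gamma (α + 1)) *
          ∫ τ in Ioo 0 t, ‖g τ‖ ^ 2 * τ ^ α := by
  set k := α ^ α / (2 ^ α * Real.Gamma (α / 2))
  set y := ((α ^ 2 / 4 : ℝ) : ℂ) * z ^ ((2 / α : ℝ) : ℂ)
  have cancel : t ^ α * t ^ (-α) = 1 := by rw [← Real.rpow_add ht, add_neg_cancel, Real.rpow_zero]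
  calc t ^ α * ‖gaugedExtension α p t g z‖ ^ 2
      = t ^ α * (t ^ (-α)) ^ 2 * k ^ 2 * ‖z ^ ((p + 1 : ℝ) : ℂ)‖ ^ 2 *
          ‖lagLaplace α t g y‖ ^ 2 := by
        rw [gaugedExtension, norm_mul, norm_mul, Complex.norm_real, mul_pow, mul_pow,
          Real.norm_eq_abs, sq_abs]
        ring
    _ ≤ t ^ α * (t ^ (-α)) ^ 2 * k ^ 2 * M ^ 2 *
          (t ^ α * ((1 / (2 * s)) ^ (α + 1) * Real.Gamma (α + 1)) *
            ∫ τ in Ioo 0 t, ‖g τ‖ ^ 2 * τ ^ α) := by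
        gcongr
        exact norm_lagLaplace_sq_le hα ht hs hg hint hre
    _ = (t ^ α * t ^ (-α)) ^ 2 * (k ^ 2 * M ^ 2 *
          ((1 / (2 * s)) ^ (α + 1) * Real.Gamma (α + 1)) *
            ∫ τ in Ioo 0 t, ‖g τ‖ ^ 2 * τ ^ α) := by ring
    _ = _ := by rw [cancel, one_pow, one_mul]

theorem exists_eventually_nhds_cpow_bounds {c ξ : ℝ} (hc : 0 < c) (hξ : 0 < ξ) (q r : ℝ) :
    ∃ s > 0, ∃ M : ℝ, ∀ᶠ z in 𝓝 (ξ : ℂ), z ∈ Complex.slitPlane ∧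
      s ≤ ((c : ℂ) * z ^ (q : ℂ)).re ∧ ‖z ^ (r : ℂ)‖ ≤ M := by
  have hslit : (ξ : ℂ) ∈ Complex.slitPlane := Complex.ofReal_mem_slitPlane.2 hξ
  have power (e : ℂ) : ContinuousAt (fun z : ℂ => z ^ e) ξ := continuousAt_cpow_const hslit
  have re_continuous : ContinuousAt (fun z : ℂ => ((c : ℂ) * z ^ (q : ℂ)).re) ξ :=
    Complex.continuous_re.continuousAt.comp ((power q).const_mul _)
  have re_pos : 0 < ((c : ℂ) * (ξ : ℂ) ^ (q : ℂ)).re := by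
    rw [← Complex.ofReal_cpow hξ.le, ← Complex.ofReal_mul, Complex.ofReal_re]
    positivity
  refine ⟨_, half_pos re_pos, ‖(ξ : ℂ) ^ (r : ℂ)‖ + 1, ?_⟩
  filter_upwards [Complex.isOpen_slitPlane.mem_nhds hslit,
    re_continuous.eventually (lt_mem_nhds (half_lt_self re_pos)),
    (power r).norm.eventually (gt_mem_nhds (lt_add_one _))] with z hz hre hnorm
  exact ⟨hz, hre.le, hnorm.le⟩

theorem exists_rpow_mul_norm_iteratedDeriv_sq_le (hα : 0 < α) (p : ℝ) (j : ℕ) {ξ : ℝ}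
    (hξ : 0 < ξ) : ∃ C : ℝ, ∀ (t : ℝ) (g : ℝ → ℂ), 0 < t →
      AEStronglyMeasurable g (volume.restrict (Ioo 0 t)) →
      IntegrableOn (fun τ => ‖g τ‖ ^ 2 * τ ^ α) (Ioo 0 t) →
      t ^ α * ‖iteratedDeriv j (fun x : ℝ => Lt α t g x * ((x ^ p : ℝ) : ℂ) *
        ((Real.exp (α ^ 2 / (4 * t) * x ^ (2 / α)) : ℝ) : ℂ)) ξ‖ ^ 2 ≤
          C * ∫ τ in Ioo 0 t, ‖g τ‖ ^ 2 * τ ^ α := by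
  obtain ⟨s, hs, M, near⟩ :=
    exists_eventually_nhds_cpow_bounds (c := α ^ 2 / 4) (by positivity) hξ (2 / α) (p + 1)
  obtain ⟨C, cauchy⟩ := exists_norm_iteratedDeriv_comp_ofReal_le (E := ℂ) near j
  set D := (α ^ α / (2 ^ α * Real.Gamma (α / 2))) ^ 2 * M ^ 2 *
    ((1 / (2 * s)) ^ (α + 1) * Real.Gamma (α + 1))
  refine ⟨C ^ 2 * D, fun t g ht hg hint => ?_⟩
  set I := ∫ τ in Ioo 0 t, ‖g τ‖ ^ 2 * τ ^ α
  have htα : 0 < t ^ α := Real.rpow_pos_of_pos ht α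
  have hα' : -1 < α := by linarith
  have restrict_eq : iteratedDeriv j (fun x : ℝ => Lt α t g x * ((x ^ p : ℝ) : ℂ) *
      ((Real.exp (α ^ 2 / (4 * t) * x ^ (2 / α)) : ℝ) : ℂ)) ξ =
        iteratedDeriv j (fun x : ℝ => gaugedExtension α p t g x) ξ := by
    refine EventuallyEq.iteratedDeriv_eq j ?_
    filter_upwards [lt_mem_nhds hξ] with x hx using (gaugedExtension_ofReal hx).symm
  have derivative_le := cauchy (gaugedExtension α p t g) √(D * I / t ^ α)
    (fun z hz => (differentiableAt_gaugedExtension hα' ht hg hint hz.1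
      (hs.trans_le hz.2.1)).differentiableWithinAt)
    (fun z hz => Real.le_sqrt_of_sq_le ((le_div_iff₀' htα).2
      (rpow_mul_norm_gaugedExtension_sq_le hα' ht hs hg hint hz.2.2 hz.2.1)))
  have hI : 0 ≤ I := setIntegral_nonneg measurableSet_Ioo fun τ hτ =>
    mul_nonneg (sq_nonneg _) (Real.rpow_nonneg hτ.1.le α)
  have hD : 0 ≤ D := by positivity
  rw [restrict_eq]
  calc t ^ α * ‖iteratedDeriv j (fun x : ℝ => gaugedExtension α p t g x) ξ‖ ^ 2
      ≤ t ^ α * (C * √(D * I / t ^ α)) ^ 2 := by gcongr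
    _ = C ^ 2 * D * I := by
        rw [mul_pow, Real.sq_sqrt (div_nonneg (mul_nonneg hD hI) htα.le)]
        field_simp

end GaugedExtension

theorem stmt18_general {α T : ℝ} {g : ℝ → ℂ} (hα : 0 < α) (hT : 0 < T) (p : ℝ) (j : ℕ)
    (hg : AEStronglyMeasurable g (volume.restrict (Ioo 0 T)))
    (hint : IntegrableOn (fun τ => ‖g τ‖ ^ 2 * τ ^ α) (Ioo 0 T)) {ξ : ℝ} (hξ : 0 < ξ) :
    Tendsto (fun t : ℝ => t ^ α *
        ‖iteratedDeriv j (fun x : ℝ => Lt α t g x * ((x ^ p : ℝ) : ℂ) *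
          ((Real.exp (α ^ 2 / (4 * t) * x ^ (2 / α)) : ℝ) : ℂ)) ξ‖ ^ 2)
      (𝓝[>] 0) (𝓝 0) := by
  obtain ⟨C, bound⟩ := exists_rpow_mul_norm_iteratedDeriv_sq_le hα p j hξ
  have upper : Tendsto (fun t => C * ∫ τ in Ioo 0 t, ‖g τ‖ ^ 2 * τ ^ α) (𝓝[>] 0) (𝓝 0) := by
    simpa only [mul_zero] using (tendsto_setIntegral_Ioo_nhdsGT hT hint).const_mul C
  refine squeeze_zero' ?_ ?_ upper
  · filter_upwards [self_mem_nhdsWithin] with t (ht : 0 < t)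
    positivity
  · filter_upwards [Ioo_mem_nhdsGT hT] with t ht
    have short_subset : Ioo 0 t ⊆ Ioo 0 T := Ioo_subset_Ioo_right ht.2.le
    exact bound t g ht.1 (hg.mono_set short_subset) (hint.mono_set short_subset)

theorem stmt18 (α T : ℝ) (hα : 0 < α) (hα2 : α ≤ 2) (hT : 0 < T) (j : ℕ)
    (g : ℝ → ℂ) (hg : Measurable g)
    (hint : IntegrableOn (fun τ => ‖g τ‖ ^ 2 * τ ^ α) (Set.Ioo 0 T))
    (ξ : ℝ) (hξ : 0 < ξ) :
    Tendsto (fun t : ℝ => t ^ α *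
        ‖iteratedDeriv j (fun x : ℝ =>
            Lt α t g x * ((x ^ (-((α - 1) * (α + 2) / (2 * α))) : ℝ) : ℂ) *
              ((Real.exp (α ^ 2 / (4 * t) * x ^ (2 / α)) : ℝ) : ℂ)) ξ‖ ^ 2)
      (nhdsWithin 0 (Set.Ioo 0 T)) (nhds 0) := by
  rw [nhdsWithin_Ioo_eq_nhdsGT hT]
  exact stmt18_general hα hT _ j hg.aestronglyMeasurable hint hξ
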